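/- Let A be a group, φ : A → ℤ a surjective homomorphism, a ∈ A with φ(a) = 1, and n > 0 an integer. Let Â = A ∗_{⟨a = αⁿ⟩} ⟨α⟩ be the group obtained from A by adjoining an n-th root α of a, let ι : A → Â be the canonical homomorphism, and let φ̂ : Â → ℤ be the homomorphism determined by φ̂(ι(g)) = n·φ(g) for g ∈ A and φ̂(α) = 1. Then the kernel of φ̂ is generated by the union of the subgroups αⁱ ι(ker φ) α⁻ⁱ for i = 0, 1, …, n−1. -/

import Mathlib

/-!
Write `N = ker φ` and let `K` be the subgroup generated by all `αⁱ ι(N) α⁻ⁱ` with `i : ℤ`.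
Since `αⁿ = ι a` normalizes `ι(N)`, the conjugate `αⁱ ι(N) α⁻ⁱ` depends only on `i` modulo `n`, so
`i = 0, …, n - 1` suffice. By construction `α` normalizes `K`; as `A = N⟨a⟩` and `Â` is generated
by `ι(A)` and `α`, it follows that `Â = K⟨α⟩`. Finally `K ≤ ker φ̂`, and a power of `α` in `ker φ̂`
is already in `K`, whence `ker φ̂ = K`.
-/

open Function Pointwise Subgroup

theorem biSup_range_eq_iSup_of_periodic {L : Type*} [CompleteLattice L] {f : ℤ → L} {n : ℕ}
    (hn : n ≠ 0) (hf : Periodic f n) :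
    ⨆ i ∈ Finset.range n, f (i : ℤ) = ⨆ i, f i := by
  refine le_antisymm (iSup₂_le fun i _ ↦ le_iSup f i) (iSup_le fun m ↦ ?_)
  obtain ⟨j, ⟨hj₀, hjn⟩, hfj⟩ := hf.exists_mem_Ico₀ (by lia) m
  lift j to ℕ using hj₀
  rw [hfj]
  exact le_iSup₂_of_le j (Finset.mem_range.2 (by exact_mod_cast hjn)) le_rfl

section ZPowersConj

variable {G : Type*} [Group G]

/-- The join of the conjugates `gⁱ M g⁻ⁱ` over all `i : ℤ`, i.e. the smallest subgroup containing
`M` and normalized by `g`. Indexing by `ℤ` makes the invariance under `g` a shift of the index. -/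
def zpowersConjSup (M : Subgroup G) (g : G) : Subgroup G :=
  ⨆ i : ℤ, M.map (MulAut.conj (g ^ i)).toMonoidHom

theorem map_conj_map_conj (M : Subgroup G) (g h : G) :
    (M.map (MulAut.conj h).toMonoidHom).map (MulAut.conj g).toMonoidHom =
      M.map (MulAut.conj (g * h)).toMonoidHom := by
  rw [map_map, map_mul]
  rfl

theorem le_zpowersConjSup (M : Subgroup G) (g : G) : M ≤ zpowersConjSup M g :=
  le_iSup_of_le 0 fun x hx ↦ ⟨x, hx, by simp⟩

theorem mem_normalizer_zpowersConjSup (M : Subgroup G) (g : G) :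
    g ∈ normalizer (zpowersConjSup M g : Set G) := by
  refine mem_normalizer_iff_map_conj_eq.2 ((Subgroup.map_iSup _ _).trans ?_)
  refine (Equiv.addLeft (1 : ℤ)).iSup_congr fun i ↦ ?_
  rw [Equiv.coe_addLeft, zpow_one_add]
  exact (map_conj_map_conj M g (g ^ i)).symm

theorem zpowersConjSup_le_ker {H : Type*} [Group H] {M : Subgroup G} {f : G →* H}
    (hM : M ≤ f.ker) (g : G) : zpowersConjSup M g ≤ f.ker :=
  iSup_le fun i ↦ map_le_iff_le_comap.2 fun _ hx ↦ f.normal_ker.conj_mem _ (hM hx) (g ^ i)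

theorem periodic_map_conj_zpow {M : Subgroup G} {g : G} {n : ℕ}
    (hg : g ^ n ∈ normalizer (M : Set G)) :
    Periodic (fun i : ℤ ↦ M.map (MulAut.conj (g ^ i)).toMonoidHom) n := fun i ↦ by
  have hM : M.map (MulAut.conj (g ^ n)).toMonoidHom = M := mem_normalizer_iff_map_conj_eq.1 hg
  dsimp only
  rw [zpow_add, zpow_natCast, ← map_conj_map_conj, hM]

theorem zpowersConjSup_eq_closure {M : Subgroup G} {g : G} {n : ℕ} (hn : n ≠ 0)
    (hg : g ^ n ∈ normalizer (M : Set G)) :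
    zpowersConjSup M g =
      closure (⋃ i ∈ Finset.range n, (fun x ↦ g ^ i * x * (g ^ i)⁻¹) '' (M : Set G)) := by
  rw [zpowersConjSup, ← biSup_range_eq_iSup_of_periodic hn (periodic_map_conj_zpow hg)]
  simp_rw [Subgroup.closure_iUnion, zpow_natCast]
  exact biSup_congr fun i _ ↦ (closure_eq (M.map (MulAut.conj (g ^ i)).toMonoidHom)).symm

end ZPowersConj

section Kernel

variable {G H : Type*} [Group G] [Group H]

theorem ker_eq_of_sup_eq_top {f : G →* H} {K L : Subgroup G} (hK : K ≤ f.ker)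
    (hLK : L ≤ normalizer (K : Set G)) (hsup : K ⊔ L = ⊤) (hinf : L ⊓ f.ker ≤ K) :
    f.ker = K := by
  refine le_antisymm (fun x hx ↦ ?_) hK
  have hx_mul : x ∈ (K : Set G) * (L : Set G) := by
    rw [← coe_mul_of_right_le_normalizer_left K L hLK, hsup]
    exact mem_top x
  obtain ⟨k, hk, l, hl, rfl⟩ := hx_mul
  exact mul_mem hk (hinf ⟨hl, (mul_mem_cancel_left (hK hk)).1 hx⟩)

theorem ker_eq_zpowersConjSup {f : G →* H} {M : Subgroup G} {g : G} (hM : M ≤ f.ker)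
    (hsup : M ⊔ zpowers g = ⊤) (hinf : zpowers g ⊓ f.ker ≤ M) :
    f.ker = zpowersConjSup M g :=
  ker_eq_of_sup_eq_top (zpowersConjSup_le_ker hM g)
    (zpowers_le.2 (mem_normalizer_zpowersConjSup M g))
    (top_unique (hsup.ge.trans (sup_le_sup_right (le_zpowersConjSup M g) _)))
    (hinf.trans (le_zpowersConjSup M g))

theorem ker_sup_zpowers_eq_top {φ : G →* H} {a : G} (ha : ∀ g, φ g ∈ zpowers (φ a)) :
    φ.ker ⊔ zpowers a = ⊤ := by
  rw [sup_comm, ← comap_map_eq, MonoidHom.map_zpowers]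
  exact top_unique fun g _ ↦ ha g

end Kernel

section Root

universe u

theorem range_sup_zpowers_eq_top_of_existsUnique {A : Type*} {G : Type u} [Group A] [Group G]
    {a : A} {n : ℕ} {ι : A →* G} {α : G} (hroot : ι a = α ^ n)
    (hUP : ∀ (Q : Type u) [Group Q] (f : A →* Q) (β : Q), f a = β ^ n →
      ∃! h : G →* Q, h.comp ι = f ∧ h α = β) :
    ι.range ⊔ zpowers α = ⊤ := by
  set S := ι.range ⊔ zpowers α
  have hιS (x : A) : ι x ∈ S := mem_sup_left ⟨x, rfl⟩
  have hαS : α ∈ S := mem_sup_right (mem_zpowers α)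
  obtain ⟨r, ⟨hrι, hrα⟩, -⟩ := hUP S (ι.codRestrict S hιS) ⟨α, hαS⟩ (Subtype.ext hroot)
  have hr : S.subtype.comp r = MonoidHom.id G := by
    refine (hUP G ι α hroot).unique ⟨?_, ?_⟩ ⟨rfl, rfl⟩
    · rw [MonoidHom.comp_assoc, hrι]
      rfl
    · rw [MonoidHom.comp_apply, hrα]
      rfl
  refine (eq_top_iff' S).2 fun x ↦ ?_
  have hrx : (r x : G) = x := DFunLike.congr_fun hr x
  exact hrx ▸ (r x).2

variable {A G C : Type*} [Group A] [Group G] [Group C] {φ : A →* C} {a : A} {n : ℕ}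
  {ι : A →* G} {α : G}

theorem pow_mem_normalizer_map (hroot : ι a = α ^ n) (N : Subgroup A) [N.Normal] :
    α ^ n ∈ normalizer (N.map ι : Set G) :=
  hroot ▸ le_normalizer_map ι (mem_map_of_mem ι (N.normalizer_eq_top ▸ mem_top a))

theorem map_sup_zpowers_eq_top {N : Subgroup A} (hroot : ι a = α ^ n)
    (hN : N ⊔ zpowers a = ⊤) (hgen : ι.range ⊔ zpowers α = ⊤) :
    N.map ι ⊔ zpowers α = ⊤ := by
  have hrange : ι.range = N.map ι ⊔ zpowers (α ^ n) := by
    rw [MonoidHom.range_eq_map, ← hN, Subgroup.map_sup, MonoidHom.map_zpowers, hroot]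
  have hpow : zpowers (α ^ n) ≤ zpowers α := zpowers_le.2 (npow_mem_zpowers α n)
  rwa [hrange, sup_assoc, sup_eq_right.2 hpow] at hgen

theorem zpowers_inf_ker_le_map_ker {H : Type*} [Group H] {f : G →* H} (hroot : ι a = α ^ n)
    (hfι : ∀ g, f (ι g) = 1 → φ g = 1) (hfα : ∀ m : ℤ, f α ^ m = 1 → (n : ℤ) ∣ m) :
    zpowers α ⊓ f.ker ≤ φ.ker.map ι := by
  rintro _ ⟨⟨m, rfl⟩, hm : f (α ^ m) = 1⟩
  obtain ⟨k, rfl⟩ := hfα m (map_zpow f α m ▸ hm)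
  have hk : ι (a ^ k) = α ^ ((n : ℤ) * k) := by
    rw [map_zpow, hroot, zpow_mul, zpow_natCast]
  exact ⟨a ^ k, hfι _ (hk ▸ hm), hk⟩

/-- Besides `ℤ → ℤ` this covers finite cyclic quotients, where `φ a` has order `k` and `f α` has
order `n * k`. -/
theorem stmt_4_general {H : Type*} [Group H] (ha : ∀ g, φ g ∈ zpowers (φ a)) (hn : n ≠ 0)
    (hroot : ι a = α ^ n) (hgen : ι.range ⊔ zpowers α = ⊤) (f : G →* H)
    (hfι : ∀ g, f (ι g) = 1 ↔ φ g = 1) (hfα : ∀ m : ℤ, f α ^ m = 1 → (n : ℤ) ∣ m) :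
    f.ker = closure
      (⋃ i ∈ Finset.range n, (fun x ↦ α ^ i * ι x * (α ^ i)⁻¹) '' (φ.ker : Set A)) := by
  have hker_le : φ.ker.map ι ≤ f.ker := map_le_iff_le_comap.2 fun g ↦ (hfι g).2
  have hsup : φ.ker.map ι ⊔ zpowers α = ⊤ :=
    map_sup_zpowers_eq_top hroot (ker_sup_zpowers_eq_top ha) hgen
  have hinf : zpowers α ⊓ f.ker ≤ φ.ker.map ι :=
    zpowers_inf_ker_le_map_ker hroot (fun g ↦ (hfι g).1) hfα
  rw [ker_eq_zpowersConjSup hker_le hsup hinf,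
    zpowersConjSup_eq_closure hn (pow_mem_normalizer_map hroot φ.ker)]
  simp only [coe_map, Set.image_image]

theorem mem_zpowers_ofAdd_one (x : Multiplicative ℤ) :
    x ∈ zpowers (Multiplicative.ofAdd (1 : ℤ)) :=
  ⟨x.toAdd, by simp [← ofAdd_zsmul]⟩

theorem ofAdd_one_zpow_eq_one_iff {m : ℤ} : Multiplicative.ofAdd (1 : ℤ) ^ m = 1 ↔ m = 0 := by
  simp [← ofAdd_zsmul]

end Root

/-- Let `A` be a group, `φ : A → ℤ` a surjective homomorphism, `a ∈ A` with
`φ a = 1` and `n > 0`.  Let `Â` be the group obtained from `A` by adjoining an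
`n`-th root `α` of `a` (the pushout of `ℤ → A, 1 ↦ a` and `ℤ → ℤ, 1 ↦ n`),
presented here as any group `Ahat` with `ι : A →* Ahat` and `α : Ahat`,
`ι a = α ^ n`, satisfying the universal property of this pushout.  Let
`φ̂ : Â → ℤ` be the homomorphism with `φ̂ (ι g) = n • φ g` and `φ̂ α = 1`.
Then `ker φ̂` is generated by the union of the subgroups
`αⁱ ι(ker φ) α⁻ⁱ`, for `i = 0, 1, …, n − 1`. -/
theorem stmt_4 {A Ahat : Type} [Group A] [Group Ahat]
    (φ : A →* Multiplicative ℤ) (hφ : Function.Surjective φ)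
    (a : A) (ha : φ a = Multiplicative.ofAdd 1)
    (n : ℕ) (hn : 0 < n)
    (ι : A →* Ahat) (α : Ahat) (hroot : ι a = α ^ n)
    (hUP : ∀ (Q : Type) [Group Q] (f : A →* Q) (β : Q), f a = β ^ n →
      ∃! h : Ahat →* Q, h.comp ι = f ∧ h α = β)
    (φhat : Ahat →* Multiplicative ℤ)
    (hφhatι : ∀ g : A, φhat (ι g) = (φ g) ^ n)
    (hφhatα : φhat α = Multiplicative.ofAdd 1) :
    φhat.ker = Subgroup.closure
      (⋃ i ∈ Finset.range n,
        (fun x : A => α ^ i * ι x * (α ^ i)⁻¹) '' (φ.ker : Set A)) :=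
  stmt_4_general (fun g ↦ ha ▸ mem_zpowers_ofAdd_one (φ g)) hn.ne' hroot
    (range_sup_zpowers_eq_top_of_existsUnique hroot hUP) φhat
    (fun g ↦ by rw [hφhatι, pow_eq_one_iff_left hn.ne'])
    (fun m hm ↦ by simp [ofAdd_one_zpow_eq_one_iff.1 (hφhatα ▸ hm)])
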